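/- arXiv:2406.18325 — 4 statements merged into one kernel-verified Lean document; each statement's English description precedes it below -/
import Mathlib

section
/- Let c₁, c₂ ∈ 𝔽_p and let N(c₁,c₂) = #{(a,b) ∈ 𝔽_q × 𝔽_q : Tr(a²) = c₁ and Tr(b²) = c₂}. If m is odd, then (as complex numbers) N(c₁,c₂) = p^{2m−2} if c₁ = 0 and c₂ = 0; N(c₁,c₂) = p^{2m−2} + p^{m−2}·η̄(−c₁)·G·Ḡ if c₁ ≠ 0 and c₂ = 0; N(c₁,c₂) = p^{2m−2} + p^{m−2}·η̄(−c₂)·G·Ḡ if c₁ = 0 and c₂ ≠ 0; and N(c₁,c₂) = p^{2m−2} + p^{m−2}(η̄(−c₁)+η̄(−c₂))·G·Ḡ + p^{−2}·η̄(c₁c₂)·G²·Ḡ² if c₁ ≠ 0 and c₂ ≠ 0. -/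
open Finset
open scoped Classical

noncomputable section

/-- `ζ_p = exp(2πi/p)`. -/
def zeta (p : ℕ) : ℂ := Complex.exp (2 * Real.pi * Complex.I / p)

/-- The canonical additive character of `ℤ/p`: `χ̄₁(c) = ζ_p^c`. -/
def chiBar (p : ℕ) (c : ZMod p) : ℂ := zeta p ^ c.val

/-- The quadratic character of `(ℤ/p)^*`, extended by `η̄(0) = 0`. -/
def etaBar (p : ℕ) (c : ZMod p) : ℂ :=
  if c = 0 then 0 else if IsSquare c then 1 else -1

/-- The quadratic character of `F^*`, extended by `η(0) = 0`. -/
def etaQ (F : Type) [Field F] (x : F) : ℂ :=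
  if x = 0 then 0 else if IsSquare x then 1 else -1

/-- The absolute trace map from `F` to `ℤ/p`. -/
def Trq (p : ℕ) (F : Type) [Field F] [Algebra (ZMod p) F] (x : F) : ZMod p :=
  Algebra.trace (ZMod p) F x

/-- The canonical additive character of `F`: `χ₁(x) = ζ_p^{Tr x}`. -/
def chiQ (p : ℕ) (F : Type) [Field F] [Algebra (ZMod p) F] (x : F) : ℂ :=
  chiBar p (Trq p F x)

/-- The quadratic Gauss sum `G` over `F`. -/
def GaussQ (p : ℕ) (F : Type) [Field F] [Fintype F] [Algebra (ZMod p) F] : ℂ :=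
  ∑ x ∈ univ.filter (fun x : F => x ≠ 0), etaQ F x * chiQ p F x

/-- The quadratic Gauss sum `Ḡ` over `ℤ/p`. -/
def GaussP (p : ℕ) [NeZero p] : ℂ :=
  ∑ y ∈ univ.filter (fun y : ZMod p => y ≠ 0), etaBar p y * chiBar p y

lemma aux_ringChar (p : ℕ) [Fact (Nat.Prime p)] (hp : Odd p)
    (F : Type) [Field F] [Algebra (ZMod p) F] : ringChar F ≠ 2 := by
  have : CharP F p := charP_of_injective_algebraMap (algebraMap (ZMod p) F).injective p
  rw [ringChar.eq F p]
  rintro rfl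
  revert hp
  decide

/-- The quadratic character with complex values. -/
def qcC (F : Type) [Field F] [Fintype F] : MulChar F ℂ :=
  (quadraticChar F).ringHomComp (Int.castRingHom ℂ)

lemma qcC_apply (F : Type) [Field F] [Fintype F] (x : F) :
    qcC F x = ((quadraticChar F x : ℤ) : ℂ) := rfl

lemma etaQ_eq (F : Type) [Field F] [Fintype F] (x : F) : etaQ F x = qcC F x := by
  rw [qcC_apply, etaQ, quadraticChar_apply, quadraticCharFun]
  split_ifs <;> simp

lemma etaBar_eq (p : ℕ) [Fact (Nat.Prime p)] (x : ZMod p) : etaBar p x = qcC (ZMod p) x := by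
  rw [← etaQ_eq, etaBar, etaQ]
  congr

lemma zeta_prim (p : ℕ) [Fact (Nat.Prime p)] : IsPrimitiveRoot (zeta p) p :=
  Complex.isPrimitiveRoot_exp p (Fact.out : p.Prime).ne_zero

/-- additive character of the prime field -/
def psiP (p : ℕ) [Fact (Nat.Prime p)] : AddChar (ZMod p) ℂ :=
  AddChar.zmodChar p (zeta_prim p).pow_eq_one

lemma psiP_prim (p : ℕ) [Fact (Nat.Prime p)] : (psiP p).IsPrimitive :=
  AddChar.zmodChar_primitive_of_primitive_root p (zeta_prim p)

lemma chiBar_eq (p : ℕ) [Fact (Nat.Prime p)] (x : ZMod p) : chiBar p x = psiP p x := rfl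

/-- additive character of the big field -/
def psiF (p : ℕ) [Fact (Nat.Prime p)] (F : Type) [Field F] [Algebra (ZMod p) F] :
    AddChar F ℂ :=
  (psiP p).compAddMonoidHom (Algebra.trace (ZMod p) F).toAddMonoidHom

lemma psiF_apply (p : ℕ) [Fact (Nat.Prime p)] (F : Type) [Field F] [Algebra (ZMod p) F]
    (x : F) : psiF p F x = psiP p (Algebra.trace (ZMod p) F x) := rfl

lemma psiF_prim (p : ℕ) [Fact (Nat.Prime p)] (F : Type) [Field F] [Fintype F]
    [Algebra (ZMod p) F] : (psiF p F).IsPrimitive := by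
  apply AddChar.IsPrimitive.of_ne_one
  intro h
  obtain ⟨x, hx⟩ := Algebra.trace_surjective (ZMod p) F 1
  have h1 : psiF p F x = 1 := by rw [h]; rfl
  rw [psiF_apply, hx, (psiP_prim p).zmod_char_eq_one_iff] at h1
  exact one_ne_zero h1

lemma gaussQ_eq (p : ℕ) [Fact (Nat.Prime p)] (F : Type) [Field F] [Fintype F]
    [Algebra (ZMod p) F] : GaussQ p F = gaussSum (qcC F) (psiF p F) := by
  rw [GaussQ, gaussSum, sum_filter]
  refine sum_congr rfl fun x _ => ?_
  rw [etaQ_eq]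
  split_ifs with h
  · rfl
  · rw [not_not.1 h]; simp [qcC_apply]

lemma gaussP_eq (p : ℕ) [Fact (Nat.Prime p)] :
    GaussP p = gaussSum (qcC (ZMod p)) (psiP p) := by
  rw [GaussP, gaussSum, sum_filter]
  refine sum_congr rfl fun x _ => ?_
  rw [etaBar_eq, chiBar_eq]
  split_ifs with h
  · rfl
  · rw [not_not.1 h]; simp [qcC_apply]

lemma qcC_sq (F : Type) [Field F] [Fintype F] (y : F) (hy : y ≠ 0) :
    qcC F y * qcC F y = 1 := by
  rw [qcC_apply, ← sq]
  exact_mod_cast quadraticChar_sq_one hy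

lemma gauss_shift (F : Type) [Field F] [Fintype F] (ψ : AddChar F ℂ) (y : F) (hy : y ≠ 0) :
    ∑ t, qcC F t * ψ (y * t) = qcC F y * gaussSum (qcC F) ψ := by
  have h := gaussSum_mulShift (qcC F) ψ (Units.mk0 y hy)
  rw [← h, Units.val_mk0, ← mul_assoc, qcC_sq F y hy, one_mul, gaussSum]
  rfl

lemma sum_sq (F : Type) [Field F] [Fintype F] (hF : ringChar F ≠ 2) (f : F → ℂ) :
    ∑ a, f (a ^ 2) = ∑ t, (qcC F t + 1) * f t := by
  rw [← sum_fiberwise (s := univ) (g := fun a : F => a ^ 2)]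
  refine sum_congr rfl fun t _ => ?_
  have h := quadraticChar_card_sqrts hF t
  have h2 : {x : F | x ^ 2 = t}.toFinset = univ.filter (fun a : F => a ^ 2 = t) := by
    ext; simp
  rw [h2] at h
  rw [sum_congr rfl (g := fun _ => f t), sum_const, nsmul_eq_mul, qcC_apply]
  · congr 1
    exact_mod_cast h
  · intro x hx
    rw [(mem_filter.1 hx).2]

lemma sum_psi_sq (F : Type) [Field F] [Fintype F] (hF : ringChar F ≠ 2) (ψ : AddChar F ℂ)
    (hψ : ψ.IsPrimitive) (y : F) (hy : y ≠ 0) :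
    ∑ a, ψ (y * a ^ 2) = qcC F y * gaussSum (qcC F) ψ := by
  rw [sum_sq F hF (fun t => ψ (y * t))]
  simp only [add_mul, one_mul, sum_add_distrib]
  rw [gauss_shift F ψ y hy]
  have h : ∑ t, ψ (y * t) = 0 := AddChar.sum_eq_zero_of_ne_one (hψ hy)
  rw [h, add_zero]

lemma pow_half (p : ℕ) [Fact (Nat.Prime p)] (hp : Odd p) (y : ZMod p) (m : ℕ) :
    y ^ (p ^ m / 2) = (y ^ (p / 2)) ^ m := by
  induction m with
  | zero => simp
  | succ m ih =>
    have h : p ^ (m + 1) / 2 = p * (p ^ m / 2) + p / 2 := by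
      obtain ⟨k, hk⟩ := hp.pow (n := m)
      obtain ⟨e, he⟩ := hp
      rw [pow_succ, hk]
      have h1 : (2 * k + 1) / 2 = k := by omega
      have h2 : p / 2 = e := by omega
      rw [h1, h2]
      have : (2 * k + 1) * p = 2 * (p * k + e) + 1 := by rw [he]; ring
      omega
    rw [h, pow_add, pow_mul, ZMod.pow_card, ih, pow_succ]

lemma qcC_int (K : Type) [Field K] [Fintype K] (hK : ringChar K ≠ 2) (y : K) :
    ∃ z : ℤ, qcC K y = (z : ℂ) ∧ (z : K) = y ^ (Fintype.card K / 2) ∧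
      (z = 0 ∨ z = 1 ∨ z = -1) :=
  ⟨quadraticChar K y, qcC_apply K y, quadraticChar_eq_pow_of_char_ne_two' hK y,
    quadraticChar_isQuadratic K y⟩

lemma qcC_sum (K : Type) [Field K] [Fintype K] (hK : ringChar K ≠ 2) :
    ∑ y : K, qcC K y = 0 := by
  simp only [qcC_apply]
  exact_mod_cast quadraticChar_sum_zero hK

lemma qcC_algebraMap (p m : ℕ) [Fact (Nat.Prime p)] (hp : Odd p)
    (F : Type) [Field F] [Fintype F] [Algebra (ZMod p) F]
    (hq : Fintype.card F = p ^ m) (hm : Odd m) (y : ZMod p) :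
    qcC F (algebraMap (ZMod p) F y) = qcC (ZMod p) y := by
  have hF := aux_ringChar p hp F
  have hZ := aux_ringChar p hp (ZMod p)
  obtain ⟨z, hz, h1, hz3⟩ := qcC_int F hF (algebraMap (ZMod p) F y)
  obtain ⟨w, hw, h2, hw3⟩ := qcC_int (ZMod p) hZ y
  rw [hz, hw]
  congr 1
  rw [ZMod.card] at h2
  rw [hq, ← map_pow, pow_half p hp, ← h2, ← Int.cast_pow, map_intCast] at h1
  have h3 : w ^ m = w := by
    rcases hw3 with h | h | h <;> rw [h]
    · exact zero_pow hm.pos.ne'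
    · simp
    · exact hm.neg_one_pow
  rw [h3] at h1
  refine Int.cast_injOn_of_ringChar_ne_two hF ?_ ?_ h1
  · rcases hz3 with h | h | h <;> rw [h] <;> simp
  · rcases hw3 with h | h | h <;> rw [h] <;> simp

lemma N1 (p m : ℕ) [Fact (Nat.Prime p)] (hp : Odd p)
    (F : Type) [Field F] [Fintype F] [Algebra (ZMod p) F]
    (hq : Fintype.card F = p ^ m) (hm : Odd m) (c : ZMod p) :
    (p : ℂ) * ((univ.filter (fun a : F => Trq p F (a ^ 2) = c)).card : ℂ) =
      (p : ℂ) ^ m + etaBar p (-c) * GaussQ p F * GaussP p := by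
  have hF := aux_ringChar p hp F
  have e1 : ∀ a : F, ∑ y : ZMod p, psiP p (y * (Trq p F (a ^ 2) - c)) =
      if Trq p F (a ^ 2) = c then (p : ℂ) else 0 := by
    intro a
    rw [AddChar.sum_mulShift _ (psiP_prim p)]
    simp [sub_eq_zero, ZMod.card]
  have e2 : (p : ℂ) * ((univ.filter (fun a : F => Trq p F (a ^ 2) = c)).card : ℂ) =
      ∑ a : F, ∑ y : ZMod p, psiP p (y * (Trq p F (a ^ 2) - c)) := by
    simp only [e1]
    rw [← sum_filter, sum_const, nsmul_eq_mul, mul_comm]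
  have e3 : ∀ y : ZMod p, ∑ a : F, psiP p (y * (Trq p F (a ^ 2) - c)) =
      psiP p (-c * y) * ∑ a : F, psiF p F (algebraMap (ZMod p) F y * a ^ 2) := by
    intro y
    rw [mul_sum]
    refine sum_congr rfl fun a _ => ?_
    rw [psiF_apply, ← Algebra.smul_def, map_smul, ← AddChar.map_add_eq_mul, smul_eq_mul, Trq]
    congr 1; ring
  rw [e2, sum_comm]
  have e4 : ∀ y : ZMod p, ∑ a : F, psiP p (y * (Trq p F (a ^ 2) - c)) =
      (if y = 0 then (p : ℂ) ^ m else 0) +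
        GaussQ p F * (qcC (ZMod p) y * psiP p (-c * y)) := by
    intro y
    rw [e3]
    by_cases hy : y = 0
    · subst hy
      simp [hq, qcC_apply]
    · rw [if_neg hy, sum_psi_sq F hF _ (psiF_prim p F) _ (by simpa using hy),
        qcC_algebraMap p m hp F hq hm, gaussQ_eq]
      ring
  simp only [e4]
  rw [sum_add_distrib, ← mul_sum]
  simp only [sum_ite_eq', mem_univ, if_true]
  congr 1
  by_cases hc : c = 0
  · subst hc
    simp only [neg_zero, zero_mul, AddChar.map_zero_eq_one, mul_one]
    rw [qcC_sum _ (aux_ringChar p hp (ZMod p)), etaBar]; simp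
  · rw [gauss_shift _ _ _ (neg_ne_zero.2 hc), gaussP_eq, etaBar_eq]
    ring

theorem N2_card_m_odd (p m : ℕ) [Fact (Nat.Prime p)] (hp : Odd p)
    (F : Type) [Field F] [Fintype F] [Algebra (ZMod p) F]
    (hm : 0 < m) (hq : Fintype.card F = p ^ m)
    (hmodd : Odd m) (c₁ c₂ : ZMod p) :
    (c₁ = 0 ∧ c₂ = 0 →
      (((univ.filter (fun ab : F × F =>
      Trq p F (ab.1 ^ 2) = c₁ ∧ Trq p F (ab.2 ^ 2) = c₂)).card : ℕ) : ℂ) = (p : ℂ) ^ (2 * (m : ℤ) - 2 : ℤ)) ∧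
    (c₁ ≠ 0 ∧ c₂ = 0 →
      (((univ.filter (fun ab : F × F =>
      Trq p F (ab.1 ^ 2) = c₁ ∧ Trq p F (ab.2 ^ 2) = c₂)).card : ℕ) : ℂ) = (p : ℂ) ^ (2 * (m : ℤ) - 2 : ℤ) + (p : ℂ) ^ ((m : ℤ) - 2 : ℤ) * etaBar p (-c₁) * GaussQ p F * GaussP p) ∧
    (c₁ = 0 ∧ c₂ ≠ 0 →
      (((univ.filter (fun ab : F × F =>
      Trq p F (ab.1 ^ 2) = c₁ ∧ Trq p F (ab.2 ^ 2) = c₂)).card : ℕ) : ℂ) = (p : ℂ) ^ (2 * (m : ℤ) - 2 : ℤ) + (p : ℂ) ^ ((m : ℤ) - 2 : ℤ) * etaBar p (-c₂) * GaussQ p F * GaussP p) ∧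
    (c₁ ≠ 0 ∧ c₂ ≠ 0 →
      (((univ.filter (fun ab : F × F =>
      Trq p F (ab.1 ^ 2) = c₁ ∧ Trq p F (ab.2 ^ 2) = c₂)).card : ℕ) : ℂ) = (p : ℂ) ^ (2 * (m : ℤ) - 2 : ℤ) + (p : ℂ) ^ ((m : ℤ) - 2 : ℤ) * (etaBar p (-c₁) + etaBar p (-c₂)) * GaussQ p F * GaussP p + (p : ℂ) ^ (-2 : ℤ) * etaBar p (c₁ * c₂) * (GaussQ p F) ^ 2 * (GaussP p) ^ 2) := by
  have hp0 : (p : ℂ) ≠ 0 := by exact_mod_cast (Fact.out : p.Prime).ne_zero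
  have hN : (((univ.filter (fun ab : F × F =>
      Trq p F (ab.1 ^ 2) = c₁ ∧ Trq p F (ab.2 ^ 2) = c₂)).card : ℕ) : ℂ) =
      ((univ.filter (fun a : F => Trq p F (a ^ 2) = c₁)).card : ℂ) *
      ((univ.filter (fun a : F => Trq p F (a ^ 2) = c₂)).card : ℂ) := by
    rw [← Nat.cast_mul, ← card_product, ← univ_product_univ, ← filter_product]
  have z1 : (p : ℂ) ^ (2 * (m : ℤ) - 2 : ℤ) = (p : ℂ) ^ m * (p : ℂ) ^ m / (p : ℂ) ^ 2 := by
    rw [zpow_sub₀ hp0, two_mul, zpow_add₀ hp0]; norm_cast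
  have z2 : (p : ℂ) ^ ((m : ℤ) - 2 : ℤ) = (p : ℂ) ^ m / (p : ℂ) ^ 2 := by
    rw [zpow_sub₀ hp0]; norm_cast
  have z3 : (p : ℂ) ^ (-2 : ℤ) = 1 / (p : ℂ) ^ 2 := by
    rw [zpow_neg, one_div]; norm_cast
  have n1 := N1 p m hp F hq hmodd c₁
  have n2 := N1 p m hp F hq hmodd c₂
  rw [mul_comm, ← eq_div_iff hp0] at n1 n2
  have hmul : etaBar p (c₁ * c₂) = etaBar p (-c₁) * etaBar p (-c₂) := by
    rw [etaBar_eq, etaBar_eq, etaBar_eq, ← map_mul, neg_mul_neg]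
  have h0 : etaBar p (-0) = 0 := by simp [etaBar]
  rw [hN, n1, n2, z1, z2, z3, hmul]
  refine ⟨?_, ?_, ?_, ?_⟩
  · rintro ⟨rfl, rfl⟩
    rw [h0]; field_simp; ring
  · rintro ⟨_, rfl⟩
    rw [h0]; field_simp; ring
  · rintro ⟨rfl, _⟩
    rw [h0]; field_simp; ring
  · intro _
    field_simp; ring
end
end

section
/- Let c₁, c₂ ∈ 𝔽_p and let N(c₁,c₂) = #{(a,b) ∈ 𝔽_q × 𝔽_q : Tr(a²) = c₁ and Tr(b²) = c₂}. If m is even, then (as complex numbers) N(c₁,c₂) = (p^{m−1} + p^{−1}(p−1)G)² if c₁ = 0 and c₂ = 0; N(c₁,c₂) = p^{2m−2} + p^{m−2}(p−2)G − p^{−2}(p−1)G² if exactly one of c₁, c₂ is nonzero; and N(c₁,c₂) = (p^{m−1} − p^{−1}G)² if c₁ ≠ 0 and c₂ ≠ 0. -/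
open Finset
open scoped Classical

noncomputable section

theorem aux_chiBar (p : ℕ) [Fact (Nat.Prime p)] (c : ZMod p) :
    chiBar p c = ZMod.stdAddChar c := by
  have h := ZMod.stdAddChar_coe (N := p) (c.val : ℤ)
  have h2 : (((c.val : ℤ)) : ZMod p) = c := by simp
  rw [h2] at h
  rw [h, chiBar, zeta, ← Complex.exp_nat_mul]
  congr 1
  push_cast
  ring

theorem aux_sq (p m : ℕ) [Fact (Nat.Prime p)] (hp : Odd p)
    (F : Type) [Field F] [Fintype F] [Algebra (ZMod p) F]
    (hq : Fintype.card F = p ^ m) (hF : ringChar F ≠ 2)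
    (hmeven : Even m) (y : ZMod p) (hy : y ≠ 0) :
    ∃ z : F, z ≠ 0 ∧ algebraMap (ZMod p) F y = z ^ 2 := by
  have hy' : algebraMap (ZMod p) F y ≠ 0 := by simpa using hy
  have h1 : IsSquare (algebraMap (ZMod p) F y) := by
    rw [FiniteField.isSquare_iff hF hy', hq]
    have hd : (p - 1) ∣ p ^ m / 2 := by
      obtain ⟨k, rfl⟩ := hmeven
      obtain ⟨t, rfl⟩ := hp
      have h2 : (2 * t + 1) ^ 2 - 1 ∣ ((2 * t + 1) ^ 2) ^ k - 1 := by
        simpa using Nat.sub_dvd_pow_sub_pow ((2 * t + 1) ^ 2) 1 k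
      rw [← pow_mul] at h2
      obtain ⟨s, hs⟩ := h2
      have h3 : (2 * t + 1) ^ 2 - 1 = 2 * ((2 * t) * (t + 1)) := by
        have : (2 * t + 1) ^ 2 = 2 * ((2 * t) * (t + 1)) + 1 := by ring
        omega
      have h4 : 0 < (2 * t + 1) ^ (2 * k) := by positivity
      rw [h3] at hs
      refine ⟨(t + 1) * s, ?_⟩
      have h5 : (2 * t + 1) ^ (k + k) = 2 * ((2 * t) * ((t + 1) * s)) + 1 := by
        rw [← two_mul]
        have : 2 * (2 * t * (t + 1)) * s = 2 * ((2 * t) * ((t + 1) * s)) := by ring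
        omega
      rw [h5]
      simp only [Nat.add_sub_cancel]
      omega
    obtain ⟨s, hs⟩ := hd
    rw [hs, pow_mul, ← map_pow, ZMod.pow_card_sub_one_eq_one hy]
    simp
  obtain ⟨z, hz⟩ := h1
  refine ⟨z, ?_, by rw [hz, sq]⟩
  rintro rfl
  simp [hz] at hy'

theorem aux_sum_sq (p : ℕ) [Fact (Nat.Prime p)]
    (F : Type) [Field F] [Fintype F] [Algebra (ZMod p) F] (hF : ringChar F ≠ 2) :
    ∑ a : F, chiQ p F (a ^ 2) = GaussQ p F := by
  have h0 : ∑ x : F, chiQ p F x = 0 := by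
    let ψ : AddChar F ℂ :=
      (ZMod.stdAddChar (N := p)).compAddMonoidHom (Algebra.trace (ZMod p) F).toAddMonoidHom
    have hψ : ψ ≠ 1 := by
      intro h
      obtain ⟨x, hx⟩ := Algebra.trace_surjective (ZMod p) F 1
      have h1 : ψ x = 1 := by rw [h]; rfl
      have h2 : (ZMod.stdAddChar (1 : ZMod p)) = 1 := by rw [← hx]; exact h1
      have h3 := ZMod.injective_stdAddChar (N := p) (h2.trans (AddChar.map_zero_eq_one _).symm)
      exact one_ne_zero h3
    have := AddChar.sum_eq_zero_of_ne_one hψ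
    rw [← this]
    refine Finset.sum_congr rfl fun x _ => ?_
    rw [chiQ, aux_chiBar]
    rfl
  have h1 : ∀ x : F, ((univ.filter (fun a : F => a ^ 2 = x)).card : ℂ) = 1 + etaQ F x := by
    intro x
    have h := quadraticChar_card_sqrts hF x
    have h2 : {a : F | a ^ 2 = x}.toFinset = univ.filter (fun a : F => a ^ 2 = x) := by
      ext; simp
    rw [h2] at h
    have h3 : ((univ.filter (fun a : F => a ^ 2 = x)).card : ℂ) = ((quadraticChar F x : ℤ) : ℂ) + 1 := by
      exact_mod_cast h
    rw [h3, add_comm, etaQ, quadraticChar_apply, quadraticCharFun]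
    split_ifs <;> simp
  have h2 : ∑ a : F, chiQ p F (a ^ 2) = ∑ x : F, (1 + etaQ F x) * chiQ p F x := by
    rw [← Finset.sum_fiberwise univ (fun a : F => a ^ 2)]
    refine Finset.sum_congr rfl fun x _ => ?_
    rw [← h1, ← nsmul_eq_mul, ← Finset.sum_const]
    refine Finset.sum_congr rfl fun a ha => ?_
    rw [(Finset.mem_filter.1 ha).2]
  rw [h2]
  simp only [add_mul, one_mul, Finset.sum_add_distrib, h0, zero_add]
  rw [GaussQ, Finset.sum_filter]
  refine Finset.sum_congr rfl fun x _ => ?_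
  split_ifs with h
  · rfl
  · simp only [not_not] at h
    simp [h, etaQ]

theorem aux_n (p m : ℕ) [Fact (Nat.Prime p)] (hp : Odd p)
    (F : Type) [Field F] [Fintype F] [Algebra (ZMod p) F]
    (hq : Fintype.card F = p ^ m) (hmeven : Even m) (c : ZMod p) :
    (p : ℂ) * ((univ.filter (fun a : F => Trq p F (a ^ 2) = c)).card : ℂ) =
      (p : ℂ) ^ m + (if c = 0 then (p : ℂ) - 1 else -1) * GaussQ p F := by
  have hF : ringChar F ≠ 2 := by
    haveI : CharP F p := charP_of_injective_algebraMap (algebraMap (ZMod p) F).injective p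
    rw [ringChar.eq F p]
    rintro rfl
    exact absurd hp (by decide)
  have hprim := ZMod.isPrimitive_stdAddChar p
  have hs : ∀ b : ZMod p, ∑ y : ZMod p, ZMod.stdAddChar (y * b) = if b = 0 then (p : ℂ) else 0 := by
    intro b
    have := AddChar.sum_mulShift b hprim
    rw [this, ZMod.card]
    split_ifs <;> simp
  have h1 : (p : ℂ) * ((univ.filter (fun a : F => Trq p F (a ^ 2) = c)).card : ℂ) =
      ∑ a : F, ∑ y : ZMod p, ZMod.stdAddChar (y * (Trq p F (a ^ 2) - c)) := by
    simp only [hs, sub_eq_zero]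
    rw [← Finset.sum_filter, Finset.sum_const, nsmul_eq_mul, mul_comm]
  have h2 : ∀ y : ZMod p, y ≠ 0 →
      ∑ a : F, (ZMod.stdAddChar (y * (Trq p F (a ^ 2) - c)) : ℂ) =
        ZMod.stdAddChar (y * (-c)) * GaussQ p F := by
    intro y hy
    obtain ⟨z, hz, hyz⟩ := aux_sq p m hp F hq hF hmeven y hy
    rw [← aux_sum_sq p F hF, Finset.mul_sum,
      ← Equiv.sum_comp (Equiv.mulLeft₀ z hz) (fun a => (ZMod.stdAddChar (y * (-c)) : ℂ) * chiQ p F (a ^ 2))]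
    refine Finset.sum_congr rfl fun a _ => ?_
    rw [chiQ, aux_chiBar, ← AddChar.map_add_eq_mul]
    congr 1
    have : Trq p F ((Equiv.mulLeft₀ z hz) a ^ 2) = y * Trq p F (a ^ 2) := by
      simp only [Trq, Equiv.mulLeft₀_apply, mul_pow, ← hyz]
      rw [← Algebra.smul_def, map_smul, smul_eq_mul]
    rw [this]
    ring
  rw [h1, Finset.sum_comm, ← Finset.add_sum_erase univ _ (Finset.mem_univ (0 : ZMod p)),
    Finset.sum_congr rfl (fun y hy => h2 y (Finset.ne_of_mem_erase hy)), ← Finset.sum_mul]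
  have h3 := hs (-c)
  rw [← Finset.add_sum_erase univ _ (Finset.mem_univ (0 : ZMod p))] at h3
  simp only [zero_mul, AddChar.map_zero_eq_one, neg_eq_zero] at h3
  have h4 : ∑ y ∈ univ.erase (0 : ZMod p), (ZMod.stdAddChar (y * (-c)) : ℂ) =
      if c = 0 then (p : ℂ) - 1 else -1 := by
    rw [← sub_eq_iff_eq_add'.2 h3.symm]
    split_ifs <;> ring
  rw [h4]
  simp [hq]

theorem N2_card_m_even (p m : ℕ) [Fact (Nat.Prime p)] (hp : Odd p)
    (F : Type) [Field F] [Fintype F] [Algebra (ZMod p) F]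
    (hm : 0 < m) (hq : Fintype.card F = p ^ m)
    (hmeven : Even m) (c₁ c₂ : ZMod p) :
    (c₁ = 0 ∧ c₂ = 0 →
      (((univ.filter (fun ab : F × F =>
      Trq p F (ab.1 ^ 2) = c₁ ∧ Trq p F (ab.2 ^ 2) = c₂)).card : ℕ) : ℂ) = ((p : ℂ) ^ ((m : ℤ) - 1 : ℤ) + (p : ℂ)⁻¹ * ((p : ℂ) - 1) * GaussQ p F) ^ 2) ∧
    ((c₁ ≠ 0 ∧ c₂ = 0) ∨ (c₁ = 0 ∧ c₂ ≠ 0) →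
      (((univ.filter (fun ab : F × F =>
      Trq p F (ab.1 ^ 2) = c₁ ∧ Trq p F (ab.2 ^ 2) = c₂)).card : ℕ) : ℂ) = (p : ℂ) ^ (2 * (m : ℤ) - 2 : ℤ) + (p : ℂ) ^ ((m : ℤ) - 2 : ℤ) * ((p : ℂ) - 2) * GaussQ p F - (p : ℂ) ^ (-2 : ℤ) * ((p : ℂ) - 1) * (GaussQ p F) ^ 2) ∧
    (c₁ ≠ 0 ∧ c₂ ≠ 0 →
      (((univ.filter (fun ab : F × F =>
      Trq p F (ab.1 ^ 2) = c₁ ∧ Trq p F (ab.2 ^ 2) = c₂)).card : ℕ) : ℂ) = ((p : ℂ) ^ ((m : ℤ) - 1 : ℤ) - (p : ℂ)⁻¹ * GaussQ p F) ^ 2) := by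
  have hp0 : (p : ℂ) ≠ 0 := by exact_mod_cast (Fact.out : Nat.Prime p).ne_zero
  have hN : (((univ.filter (fun ab : F × F =>
      Trq p F (ab.1 ^ 2) = c₁ ∧ Trq p F (ab.2 ^ 2) = c₂)).card : ℕ) : ℂ) =
      ((univ.filter (fun a : F => Trq p F (a ^ 2) = c₁)).card : ℂ) *
      ((univ.filter (fun a : F => Trq p F (a ^ 2) = c₂)).card : ℂ) := by
    rw [← Nat.cast_mul, ← Finset.card_product]
    congr 2
    ext ab
    simp
  have e : ∀ c : ZMod p, ((univ.filter (fun a : F => Trq p F (a ^ 2) = c)).card : ℂ) =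
      ((p : ℂ) ^ m + (if c = 0 then (p : ℂ) - 1 else -1) * GaussQ p F) / p := by
    intro c
    rw [← aux_n p m hp F hq hmeven c]
    field_simp
  have z1 : (p : ℂ) ^ ((m : ℤ) - 1 : ℤ) = (p : ℂ) ^ m / p := by
    rw [zpow_sub₀ hp0]; simp
  have z2 : (p : ℂ) ^ ((m : ℤ) - 2 : ℤ) = (p : ℂ) ^ m / p ^ 2 := by
    rw [zpow_sub₀ hp0]; norm_cast
  have z3 : (p : ℂ) ^ (2 * (m : ℤ) - 2 : ℤ) = ((p : ℂ) ^ m) ^ 2 / p ^ 2 := by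
    rw [zpow_sub₀ hp0, ← pow_mul, mul_comm m 2]; norm_cast
  have z4 : (p : ℂ) ^ (-2 : ℤ) = 1 / p ^ 2 := by
    rw [zpow_neg, one_div]; norm_cast
  rw [hN, e c₁, e c₂, z1, z2, z3, z4]
  refine ⟨?_, ?_, ?_⟩
  · rintro ⟨h1, h2⟩
    rw [if_pos h1, if_pos h2]
    field_simp
  · rintro (⟨h1, h2⟩ | ⟨h1, h2⟩)
    · rw [if_neg h1, if_pos h2]
      field_simp
      ring
    · rw [if_pos h1, if_neg h2]
      field_simp
      ring
  · rintro ⟨h1, h2⟩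
    rw [if_neg h1, if_neg h2]
    field_simp
    ring
end
end

section
/- For j ∈ {1, −1}, let L_j be the number of triples (c₁,c₂,c₃) ∈ 𝔽_p^* × 𝔽_p^* × 𝔽_p^* such that η̄(c₃² − c₁c₂) = j. Then L₁ = (p−1)²(p−3)/2 and L₋₁ = (p−1)³/2. -/
open Finset
open scoped Classical

noncomputable section

lemma eta_cards (p : ℕ) [Fact (Nat.Prime p)] (hp : Odd p) :
    ((univ.filter (fun y : ZMod p => etaBar p y = 1)).card : ℂ) = ((p : ℂ) - 1) / 2 ∧
    ((univ.filter (fun y : ZMod p => etaBar p y = -1)).card : ℂ) = ((p : ℂ) - 1) / 2 := by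
  have h2 : ringChar (ZMod p) ≠ 2 := by
    rw [ZMod.ringChar_zmod_n]
    rintro rfl
    exact absurd hp (by decide)
  have hq : ∀ y : ZMod p, etaBar p y = ((quadraticChar (ZMod p) y : ℤ) : ℂ) := by
    intro y
    rw [quadraticChar_apply, quadraticCharFun, etaBar]
    split_ifs <;> simp
  have hs : ∑ y : ZMod p, etaBar p y = 0 := by
    simp_rw [hq]
    rw [← Int.cast_sum, quadraticChar_sum_zero h2, Int.cast_zero]
  have hne : (1 : ℂ) ≠ -1 := by norm_num
  have e1 : ∑ y : ZMod p, etaBar p y =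
      ((univ.filter (fun y : ZMod p => etaBar p y = 1)).card : ℂ) -
      ((univ.filter (fun y : ZMod p => etaBar p y = -1)).card : ℂ) := by
    rw [card_filter, card_filter]
    push_cast
    rw [← sum_sub_distrib]
    refine sum_congr rfl fun y _ => ?_
    unfold etaBar
    split_ifs <;> norm_num at *
  have e2 : (p : ℂ) =
      ((univ.filter (fun y : ZMod p => etaBar p y = 1)).card : ℂ) +
      ((univ.filter (fun y : ZMod p => etaBar p y = -1)).card : ℂ) + 1 := by
    have h0 : (1 : ℂ) = ∑ y : ZMod p, if y = 0 then 1 else 0 := by simp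
    have hc : (p : ℂ) = ∑ y : ZMod p, (1 : ℂ) := by simp [ZMod.card]
    rw [card_filter, card_filter]
    push_cast
    refine Eq.trans ?_ (congrArg (fun t => _ + t) h0.symm)
    rw [hc, ← sum_add_distrib, ← sum_add_distrib]
    refine sum_congr rfl fun y _ => ?_
    unfold etaBar
    split_ifs <;> norm_num at *
  rw [hs] at e1
  constructor
  · linear_combination (-1/2) * e1 - (1/2) * e2
  · linear_combination (1/2) * e1 - (1/2) * e2

lemma card_nonzero (p : ℕ) [Fact (Nat.Prime p)] :
    ((univ.filter (fun y : ZMod p => y ≠ 0)).card : ℂ) = (p : ℂ) - 1 := by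
  have := (Fact.out : Nat.Prime p).one_lt.le
  rw [filter_ne', card_erase_of_mem (mem_univ _), card_univ, ZMod.card]
  push_cast [this]
  rfl

/-- Change of variables `y = c₃² - c₁ c₂`. -/
lemma card_transform (p : ℕ) [Fact (Nat.Prime p)] (j : ℂ) :
    (univ.filter (fun c : ZMod p × ZMod p × ZMod p =>
      c.1 ≠ 0 ∧ c.2.1 ≠ 0 ∧ c.2.2 ≠ 0 ∧ etaBar p (c.2.2 ^ 2 - c.1 * c.2.1) = j)).card =
    (univ.filter (fun c : ZMod p × ZMod p × ZMod p =>
      c.1 ≠ 0 ∧ c.2.1 ≠ c.2.2 ^ 2 ∧ c.2.2 ≠ 0 ∧ etaBar p c.2.1 = j)).card := by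
  refine card_nbij' (fun c => (c.1, c.2.2 ^ 2 - c.1 * c.2.1, c.2.2))
    (fun c => (c.1, (c.2.2 ^ 2 - c.2.1) / c.1, c.2.2)) ?_ ?_ ?_ ?_
  · rintro ⟨a, b, c⟩ h
    simp only [coe_filter, mem_univ, true_and, Set.mem_ofPred_eq] at h ⊢
    obtain ⟨ha, hb, hc, h⟩ := h
    refine ⟨ha, ?_, hc, h⟩
    simp [ha, hb]
  · rintro ⟨a, b, c⟩ h
    simp only [coe_filter, mem_univ, true_and, Set.mem_ofPred_eq] at h ⊢
    obtain ⟨ha, hb, hc, h⟩ := h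
    refine ⟨ha, div_ne_zero (sub_ne_zero.2 hb.symm) ha, hc, ?_⟩
    rw [mul_div_cancel₀ _ ha, sub_sub_cancel]
    exact h
  · rintro ⟨a, b, c⟩ h
    simp only [coe_filter, mem_univ, true_and, Set.mem_ofPred_eq] at h ⊢
    obtain ⟨ha, hb, hc, h⟩ := h
    simp [ha]
  · rintro ⟨a, b, c⟩ h
    simp only [coe_filter, mem_univ, true_and, Set.mem_ofPred_eq] at h ⊢
    obtain ⟨ha, hb, hc, h⟩ := h
    simp [mul_div_cancel₀ _ ha]

lemma eta_sq (p : ℕ) [Fact (Nat.Prime p)] {c : ZMod p} (hc : c ≠ 0) : etaBar p (c ^ 2) = 1 := by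
  rw [etaBar, if_neg (pow_ne_zero 2 hc), if_pos (IsSquare.sq c)]

theorem cyclotomic_triple_count (p : ℕ) [Fact (Nat.Prime p)] (hp : Odd p) :
    (((univ.filter (fun c : ZMod p × ZMod p × ZMod p =>
      c.1 ≠ 0 ∧ c.2.1 ≠ 0 ∧ c.2.2 ≠ 0 ∧
        etaBar p (c.2.2 ^ 2 - c.1 * c.2.1) = 1)).card : ℕ) : ℂ) = (((p : ℂ) - 1) ^ 2 * ((p : ℂ) - 3)) / 2 ∧
    (((univ.filter (fun c : ZMod p × ZMod p × ZMod p =>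
      c.1 ≠ 0 ∧ c.2.1 ≠ 0 ∧ c.2.2 ≠ 0 ∧
        etaBar p (c.2.2 ^ 2 - c.1 * c.2.1) = -1)).card : ℕ) : ℂ) = (((p : ℂ) - 1) ^ 3) / 2 := by
  have hN := card_nonzero p
  obtain ⟨hA, hB⟩ := eta_cards p hp
  rw [card_transform, card_transform]
  constructor
  · have hprod : (univ.filter (fun c : ZMod p × ZMod p × ZMod p =>
        c.1 ≠ 0 ∧ c.2.1 ≠ c.2.2 ^ 2 ∧ c.2.2 ≠ 0 ∧ etaBar p c.2.1 = 1)) =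
        (univ.filter (fun y : ZMod p => y ≠ 0)) ×ˢ
          ((univ.filter (fun y : ZMod p => etaBar p y = 1)) ×ˢ
            (univ.filter (fun y : ZMod p => y ≠ 0))) \
        ((univ.filter (fun y : ZMod p => y ≠ 0)) ×ˢ
          (univ.filter (fun y : ZMod p => y ≠ 0))).image (fun c => (c.1, c.2 ^ 2, c.2)) := by
      ext ⟨a, b, c⟩
      simp only [mem_filter, mem_univ, true_and, mem_sdiff, mem_product, mem_image,
        Prod.exists, Prod.mk.injEq]
      constructor
      · rintro ⟨ha, hb, hc, h⟩
        refine ⟨⟨ha, h, hc⟩, ?_⟩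
        rintro ⟨x, y, -, -, h1, rfl⟩
        exact hb h1.symm
      · rintro ⟨⟨ha, h, hc⟩, hn⟩
        exact ⟨ha, fun hb => hn ⟨a, c, ⟨ha, hc⟩, rfl, hb.symm, rfl⟩, hc, h⟩
    have hsub : ((univ.filter (fun y : ZMod p => y ≠ 0)) ×ˢ
          (univ.filter (fun y : ZMod p => y ≠ 0))).image (fun c => (c.1, c.2 ^ 2, c.2)) ⊆
        (univ.filter (fun y : ZMod p => y ≠ 0)) ×ˢ
          ((univ.filter (fun y : ZMod p => etaBar p y = 1)) ×ˢ
            (univ.filter (fun y : ZMod p => y ≠ 0))) := by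
      intro x hx
      simp only [mem_image, mem_product, mem_filter, mem_univ, true_and, Prod.exists] at hx
      obtain ⟨a, c, ⟨ha, hc⟩, rfl⟩ := hx
      simp only [mem_product, mem_filter, mem_univ, true_and]
      exact ⟨ha, eta_sq p hc, hc⟩
    rw [hprod, card_sdiff_of_subset hsub, Nat.cast_sub (card_le_card hsub), card_image_of_injective,
      card_product, card_product, card_product]
    · push_cast
      rw [hN, hA]
      ring
    · rintro ⟨a, b⟩ ⟨c, d⟩ h
      simp only [Prod.mk.injEq] at h ⊢
      exact ⟨h.1, h.2.2⟩
  · have hprod : (univ.filter (fun c : ZMod p × ZMod p × ZMod p =>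
        c.1 ≠ 0 ∧ c.2.1 ≠ c.2.2 ^ 2 ∧ c.2.2 ≠ 0 ∧ etaBar p c.2.1 = -1)) =
        (univ.filter (fun y : ZMod p => y ≠ 0)) ×ˢ
          ((univ.filter (fun y : ZMod p => etaBar p y = -1)) ×ˢ
            (univ.filter (fun y : ZMod p => y ≠ 0))) := by
      ext ⟨a, b, c⟩
      simp only [mem_filter, mem_univ, true_and, mem_product]
      constructor
      · rintro ⟨ha, hb, hc, h⟩
        exact ⟨ha, h, hc⟩
      · rintro ⟨ha, h, hc⟩
        refine ⟨ha, ?_, hc, h⟩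
        rintro rfl
        rw [eta_sq p hc] at h
        norm_num at h
    rw [hprod, card_product, card_product]
    push_cast
    rw [hN, hB]
    ring
end
end

section
/- Let c₁, c₃ ∈ 𝔽_p and set Ψ₂ = Σ_{a,b ∈ 𝔽_q} Σ_{x ∈ 𝔽_p^*} ζ_p^{x·Tr(a²) − x·c₁} Σ_{z ∈ 𝔽_p^*} ζ_p^{z·Tr(ab) − z·c₃}. Then Ψ₂ = p^m(p−1)² if c₁ = 0 and c₃ = 0; Ψ₂ = −p^m(p−1) if exactly one of c₁, c₃ is nonzero; and Ψ₂ = p^m if c₁ ≠ 0 and c₃ ≠ 0. -/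
open Finset
open scoped Classical

noncomputable section

lemma chiBar_zero (p : ℕ) : chiBar p 0 = 1 := by simp [chiBar]

lemma chiBar_add (p : ℕ) [Fact (Nat.Prime p)] (a b : ZMod p) :
    chiBar p (a + b) = chiBar p a * chiBar p b := by
  have h := (zeta_prim p).pow_eq_one
  have := (AddChar.zmodChar p h).map_add_eq_mul a b
  simpa only [AddChar.zmodChar_apply, chiBar] using this

lemma chiBar_ne_one (p : ℕ) [Fact (Nat.Prime p)] {a : ZMod p} (ha : a ≠ 0) :
    chiBar p a ≠ 1 := by
  intro h
  have h2 := ((zeta_prim p).pow_eq_one_iff_dvd a.val).1 h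
  have h3 := Nat.eq_zero_of_dvd_of_lt h2 (ZMod.val_lt a)
  exact ha ((ZMod.val_eq_zero a).1 h3)

lemma sum_chiBar_hom {G : Type*} [AddCommGroup G] [Fintype G] (p : ℕ) [Fact (Nat.Prime p)]
    (f : G →+ ZMod p) (g : G) (hg : f g ≠ 0) : ∑ x, chiBar p (f x) = 0 := by
  have h : ∑ x, chiBar p (f x) = chiBar p (f g) * ∑ x, chiBar p (f x) := by
    rw [Finset.mul_sum, ← Equiv.sum_comp (Equiv.addLeft g)]
    refine Finset.sum_congr rfl fun x _ => ?_
    simp [chiBar_add]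
  have h2 : (chiBar p (f g) - 1) * ∑ x, chiBar p (f x) = 0 := by
    rw [sub_mul, ← h]; ring
  exact (mul_eq_zero.1 h2).resolve_left (sub_ne_zero.2 (chiBar_ne_one p hg))

lemma sum_units_zero (p : ℕ) [Fact (Nat.Prime p)] :
    ∑ z ∈ univ.filter (fun z : ZMod p => z ≠ 0), chiBar p (z * 0 - z * 0) = (p : ℂ) - 1 := by
  have h1 : (univ.filter (fun z : ZMod p => z ≠ 0)) = univ.erase 0 := by ext; simp
  have hp := (Fact.out : p.Prime).one_le
  rw [h1]
  simp [chiBar_zero, ZMod.card, Nat.cast_sub hp]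

lemma sum_units_ne (p : ℕ) [Fact (Nat.Prime p)] (c : ZMod p) (hc : c ≠ 0) :
    ∑ z ∈ univ.filter (fun z : ZMod p => z ≠ 0), chiBar p (z * 0 - z * c) = -1 := by
  have h1 : (univ.filter (fun z : ZMod p => z ≠ 0)) = univ.erase 0 := by ext; simp
  have h := sum_chiBar_hom p (AddMonoidHom.mulRight (-c)) 1 (by simpa using hc)
  rw [← Finset.add_sum_erase _ _ (mem_univ (0 : ZMod p))] at h
  simp only [AddMonoidHom.coe_mulRight, zero_mul, chiBar_zero] at h
  rw [h1]
  have h3 : ∀ z : ZMod p, z * 0 - z * c = z * -c := fun z => by ring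
  simp only [h3]
  linear_combination h

lemma Psi2_inner (p : ℕ) [Fact (Nat.Prime p)]
    (F : Type) [Field F] [Fintype F] [Algebra (ZMod p) F] (a : F) (ha : a ≠ 0)
    (z c : ZMod p) (hz : z ≠ 0) :
    ∑ b : F, chiBar p (z * Trq p F (a * b) - z * c) = 0 := by
  obtain ⟨t, ht⟩ := Algebra.trace_surjective (ZMod p) F 1
  have h := sum_chiBar_hom p ((AddMonoidHom.mulLeft z).comp
    ((Algebra.trace (ZMod p) F).toAddMonoidHom.comp (AddMonoidHom.mulLeft a))) (a⁻¹ * t) (by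
      simp [ha, ht, hz])
  simp only [sub_eq_add_neg, chiBar_add, ← Finset.sum_mul]
  have h' : ∑ b : F, chiBar p (z * Trq p F (a * b)) = 0 := h
  rw [h', zero_mul]

lemma Psi2_main (p m : ℕ) [Fact (Nat.Prime p)]
    (F : Type) [Field F] [Fintype F] [Algebra (ZMod p) F]
    (hq : Fintype.card F = p ^ m) (c₁ c₃ : ZMod p) :
      (∑ a : F, ∑ b : F,
      (∑ x ∈ univ.filter (fun x : ZMod p => x ≠ 0), chiBar p (x * Trq p F (a ^ 2) - x * c₁)) *
      (∑ z ∈ univ.filter (fun z : ZMod p => z ≠ 0), chiBar p (z * Trq p F (a * b) - z * c₃))) =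
      (p : ℂ) ^ m *
      ((∑ x ∈ univ.filter (fun x : ZMod p => x ≠ 0), chiBar p (x * 0 - x * c₁)) *
      (∑ z ∈ univ.filter (fun z : ZMod p => z ≠ 0), chiBar p (z * 0 - z * c₃))) := by
  rw [Finset.sum_eq_single (0 : F)]
  · have h0 : Trq p F 0 = 0 := by simp [Trq]
    have h2 : (0 : F) ^ 2 = 0 := by simp
    simp only [h2, zero_mul, h0, Finset.sum_const, Finset.card_univ, hq, nsmul_eq_mul,
      Nat.cast_pow]
  · intro a _ ha
    rw [← Finset.mul_sum, Finset.sum_comm]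
    refine mul_eq_zero_of_right _ (Finset.sum_eq_zero ?_)
    intro z hz
    exact Psi2_inner p F a ha z c₃ (by simpa using hz)
  · simp

theorem Psi2_eval (p m : ℕ) [Fact (Nat.Prime p)] (hp : Odd p)
    (F : Type) [Field F] [Fintype F] [Algebra (ZMod p) F]
    (hm : 0 < m) (hq : Fintype.card F = p ^ m)
    (c₁ c₃ : ZMod p) :
    (c₁ = 0 ∧ c₃ = 0 →
      (∑ a : F, ∑ b : F,
      (∑ x ∈ univ.filter (fun x : ZMod p => x ≠ 0), chiBar p (x * Trq p F (a ^ 2) - x * c₁)) *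
      (∑ z ∈ univ.filter (fun z : ZMod p => z ≠ 0), chiBar p (z * Trq p F (a * b) - z * c₃))) = (p : ℂ) ^ m * ((p : ℂ) - 1) ^ 2) ∧
    (c₁ = 0 ∧ c₃ ≠ 0 →
      (∑ a : F, ∑ b : F,
      (∑ x ∈ univ.filter (fun x : ZMod p => x ≠ 0), chiBar p (x * Trq p F (a ^ 2) - x * c₁)) *
      (∑ z ∈ univ.filter (fun z : ZMod p => z ≠ 0), chiBar p (z * Trq p F (a * b) - z * c₃))) = -((p : ℂ) ^ m * ((p : ℂ) - 1))) ∧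
    (c₁ ≠ 0 ∧ c₃ = 0 →
      (∑ a : F, ∑ b : F,
      (∑ x ∈ univ.filter (fun x : ZMod p => x ≠ 0), chiBar p (x * Trq p F (a ^ 2) - x * c₁)) *
      (∑ z ∈ univ.filter (fun z : ZMod p => z ≠ 0), chiBar p (z * Trq p F (a * b) - z * c₃))) = -((p : ℂ) ^ m * ((p : ℂ) - 1))) ∧
    (c₁ ≠ 0 ∧ c₃ ≠ 0 →
      (∑ a : F, ∑ b : F,
      (∑ x ∈ univ.filter (fun x : ZMod p => x ≠ 0), chiBar p (x * Trq p F (a ^ 2) - x * c₁)) *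
      (∑ z ∈ univ.filter (fun z : ZMod p => z ≠ 0), chiBar p (z * Trq p F (a * b) - z * c₃))) = (p : ℂ) ^ m) := by
  rw [Psi2_main p m F hq]
  refine ⟨?_, ?_, ?_, ?_⟩
  · rintro ⟨rfl, rfl⟩
    rw [sum_units_zero]; ring
  · rintro ⟨rfl, h⟩
    rw [sum_units_zero, sum_units_ne p _ h]; ring
  · rintro ⟨h, rfl⟩
    rw [sum_units_zero, sum_units_ne p _ h]; ring
  · rintro ⟨h, h'⟩
    rw [sum_units_ne p _ h, sum_units_ne p _ h']; ring
end
end
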